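/- Let (X,d) be a metric space and I : X → ℝ ∪ {+∞} a proper lower semicontinuous functional. Suppose for some x ∈ D(I) there exist constants δ > 0, b > I(x), α > 0, a neighbourhood U of x, and a continuous map Ψ : (U ∩ {u ∈ D(I) : I(u) ≤ b}) × [0,α] → X such that for all (u,t) in its domain, d(Ψ(u,t),u) ≤ t and I(u) − I(Ψ(u,t)) ≥ δt. Then the weak metric slope of I at x satisfies |dI|(x) ≥ δ. -/

import Mathlib

open Set Metric Filter
open scoped ENNReal Topology

/-- A point `x` is a `δ`-regular point of the (continuous) function `J`: there are a
neighbourhood `U` of `x`, a constant `α > 0` and a continuous map `ψ : U × [0,α] → Y` with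
`d(ψ(u,t),u) ≤ t` and `J(u) - J(ψ(u,t)) ≥ δ t`. -/
def IsDeltaRegular {Y : Type*} [MetricSpace Y] (J : Y → ℝ) (x : Y) (δ : ℝ) : Prop :=
  ∃ U ∈ 𝓝 x, ∃ α : ℝ, 0 < α ∧ ∃ ψ : Y → ℝ → Y,
    ContinuousOn (fun p : Y × ℝ => ψ p.1 p.2) (U ×ˢ Icc 0 α) ∧
    ∀ u ∈ U, ∀ t ∈ Icc (0:ℝ) α, dist (ψ u t) u ≤ t ∧ δ * t ≤ J u - J (ψ u t)

/-- The weak metric slope `|dJ|(x)` of a (continuous) function `J` at `x`: the supremum of all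
`δ > 0` such that `x` is a `δ`-regular point of `J` (equal to `0` if there is no such `δ`). -/
noncomputable def weakSlope {Y : Type*} [MetricSpace Y] (J : Y → ℝ) (x : Y) : ℝ≥0∞ :=
  ⨆ δ ∈ {δ : ℝ | 0 < δ ∧ IsDeltaRegular J x δ}, ENNReal.ofReal δ

/-- The weak metric Palais–Smale condition: every sequence along which `J` converges to a real
number and the weak metric slope tends to `0` has a convergent subsequence. -/
def WeakPalaisSmale {Y : Type*} [MetricSpace Y] (J : Y → ℝ) : Prop :=
  ∀ (u : ℕ → Y) (c : ℝ),
    Tendsto (fun n => J (u n)) atTop (𝓝 c) →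
    Tendsto (fun n => weakSlope J (u n)) atTop (𝓝 0) →
    ∃ (y : Y) (φ : ℕ → ℕ), StrictMono φ ∧ Tendsto (u ∘ φ) atTop (𝓝 y)

/-- The epigraph `epi(I) = {(u,ξ) : I(u) ≤ ξ}` of a functional `I : X → ℝ ∪ {+∞}`, equipped
(via `WithLp 2`) with the graph metric `d_epi((u,ξ),(v,ζ)) = √(d(u,v)² + |ξ-ζ|²)`. -/
abbrev Epi {X : Type*} [MetricSpace X] (I : X → EReal) : Type _ :=
  {p : WithLp 2 (X × ℝ) //
    I ((WithLp.equiv 2 (X × ℝ)) p).1 ≤ ((((WithLp.equiv 2 (X × ℝ)) p).2 : ℝ) : EReal)}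

/-- The point of an epigraph element `(u, ξ)` of the epigraph of `I`. -/
noncomputable def Epi.pt {X : Type*} [MetricSpace X] {I : X → EReal} (p : Epi I) : X :=
  ((WithLp.equiv 2 (X × ℝ)) p.1).1

/-- Build an element of the epigraph of `I` from `x : X` and `ξ : ℝ` with `I x ≤ ξ`. -/
noncomputable def Epi.mk' {X : Type*} [MetricSpace X] (I : X → EReal) (x : X) (ξ : ℝ)
    (h : I x ≤ (ξ : EReal)) : Epi I :=
  ⟨(WithLp.equiv 2 (X × ℝ)).symm (x, ξ), by simpa using h⟩

/-- The epigraph extension `G_I : epi(I) → ℝ`, `G_I(u,ξ) = ξ`. -/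
noncomputable def epiExt {X : Type*} [MetricSpace X] (I : X → EReal) (p : Epi I) : ℝ :=
  ((WithLp.equiv 2 (X × ℝ)) p.1).2

/-- The weak metric slope `|dI|(x)` of a proper lower semicontinuous functional
`I : X → ℝ ∪ {+∞}` at a point `x ∈ D(I)`, defined through the weak metric slope of the
epigraph extension `G_I` at `(x, I(x))`. -/
noncomputable def lscWeakSlope {X : Type*} [MetricSpace X] (I : X → EReal) (x : X) : ℝ≥0∞ :=
  if hx : I x ≤ (((I x).toReal : ℝ) : EReal) then
    let s := weakSlope (epiExt I) (Epi.mk' I x (I x).toReal hx)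
    if s < 1 then ENNReal.ofReal (s.toReal / Real.sqrt (1 - s.toReal ^ 2)) else ⊤
  else ⊤

/-- The weak metric Palais–Smale condition for a proper l.s.c. functional `I : X → ℝ ∪ {+∞}`. -/
def WeakPalaisSmaleLSC {X : Type*} [MetricSpace X] (I : X → EReal) : Prop :=
  ∀ (u : ℕ → X) (c : ℝ),
    Tendsto (fun n => I (u n)) atTop (𝓝 ((c : EReal))) →
    Tendsto (fun n => lscWeakSlope I (u n)) atTop (𝓝 0) →
    ∃ (y : X) (φ : ℕ → ℕ), StrictMono φ ∧ Tendsto (u ∘ φ) atTop (𝓝 y)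

/-- The (strong) metric slope `|∂J|(x) = limsup_{y → x} (J(x) - J(y))₊ / d(x,y)` of a
real-valued function. -/
noncomputable def metricSlopeReal {Y : Type*} [MetricSpace Y] (J : Y → ℝ) (x : Y) : ℝ≥0∞ :=
  limsup (fun y => ENNReal.ofReal (max (J x - J y) 0 / dist x y)) (𝓝[≠] x)

/-- The (strong) metric slope of a functional `I : X → ℝ ∪ {+∞}`, equal to `+∞` outside of the
domain of `I`. -/
noncomputable def metricSlope {X : Type*} [MetricSpace X] (I : X → EReal) (x : X) : ℝ≥0∞ :=
  if I x = ⊤ then ⊤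
  else limsup (fun y => ENNReal.ofReal ((max (I x - I y) 0).toReal / dist x y)) (𝓝[≠] x)

/-- `γ : [0,1] → Y` is a unit speed minimising geodesic from `x₀` to `x₁`. -/
def IsUnitSpeedGeodesic {Y : Type*} [MetricSpace Y] (γ : ℝ → Y) (x₀ x₁ : Y) : Prop :=
  ContinuousOn γ (Icc 0 1) ∧ γ 0 = x₀ ∧ γ 1 = x₁ ∧
    ∀ s ∈ Icc (0:ℝ) 1, ∀ t ∈ Icc (0:ℝ) 1, dist (γ s) (γ t) = |s - t| * dist x₀ x₁

/-- A geodesic metric space: any two points are joined by a unit speed minimising geodesic. -/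
def IsGeodesicSpace (Y : Type*) [MetricSpace Y] : Prop :=
  ∀ x₀ x₁ : Y, ∃ γ : ℝ → Y, IsUnitSpeedGeodesic γ x₀ x₁

/-- `I` is `λ`-geodesically convex. -/
def GeodesicallyConvex {X : Type*} [MetricSpace X] (I : X → EReal) (lam : ℝ) : Prop :=
  ∀ x₀ x₁ : X, I x₀ ≠ ⊤ → I x₁ ≠ ⊤ →
    ∀ γ : ℝ → X, IsUnitSpeedGeodesic γ x₀ x₁ → ∀ t ∈ Icc (0:ℝ) 1,
      I (γ t) ≤ ((1 - t : ℝ) : EReal) * I x₀ + ((t : ℝ) : EReal) * I x₁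
        - (((lam / 2) * t * (1 - t) * dist x₀ x₁ ^ 2 : ℝ) : EReal)

/-!
The map `Ψ` lifts to the epigraph by lowering the height at rate `δ`: the lifted map
`((u, ξ), t) ↦ (Ψ (u, t), ξ - δ t)` takes values in the epigraph because
`I (Ψ (u, t)) ≤ I u - δ t ≤ ξ - δ t`, and `ξ < b` guarantees that `Ψ (u, t)` is defined. In the
graph metric it moves points at speed at most `√(1 + δ²)`, so after slowing time down to unit speed
it decreases the height at rate `δ / √(1 + δ²)`. Writing `δ = tan θ`, this rate is `sin θ`, and the
normalisation `s ↦ s / √(1 - s²) = tan (arcsin s)` in the definition of `|dI|` turns it back into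
`tan θ = δ`.
-/

section WeakSlope

variable {Y : Type*} [MetricSpace Y] {J : Y → ℝ} {x : Y} {δ : ℝ}

theorem ofReal_le_weakSlope (hδ : 0 < δ) (h : IsDeltaRegular J x δ) :
    ENNReal.ofReal δ ≤ weakSlope J x :=
  le_iSup₂_of_le (f := fun (ε : ℝ) (_ : 0 < ε ∧ IsDeltaRegular J x ε) => ENNReal.ofReal ε)
    δ ⟨hδ, h⟩ le_rfl

theorem isDeltaRegular_div_of_dist_le_mul {c α : ℝ} (hc : 0 < c) (hα : 0 < α)
    {U : Set Y} (hU : U ∈ 𝓝 x) {ψ : Y → ℝ → Y}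
    (hcont : ContinuousOn (fun p : Y × ℝ => ψ p.1 p.2) (U ×ˢ Icc 0 α))
    (hdist : ∀ u ∈ U, ∀ t ∈ Icc (0 : ℝ) α, dist (ψ u t) u ≤ c * t)
    (hdec : ∀ u ∈ U, ∀ t ∈ Icc (0 : ℝ) α, δ * t ≤ J u - J (ψ u t)) :
    IsDeltaRegular J x (δ / c) := by
  have htime : ∀ t ∈ Icc 0 (c * α), t / c ∈ Icc 0 α := fun t ht =>
    ⟨div_nonneg ht.1 hc.le, (div_le_iff₀' hc).2 ht.2⟩
  refine ⟨U, hU, c * α, mul_pos hc hα, fun u t => ψ u (t / c), ?_, fun u hu t ht => ⟨?_, ?_⟩⟩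
  · exact hcont.comp (f := fun p : Y × ℝ => (p.1, p.2 / c))
      (Continuous.continuousOn (by fun_prop)) fun p hp => ⟨hp.1, htime _ hp.2⟩
  · simpa only [mul_div_cancel₀ t hc.ne'] using hdist u hu _ (htime t ht)
  · simpa only [div_mul_eq_mul_div, mul_div_assoc] using hdec u hu _ (htime t ht)

end WeakSlope

theorem le_div_sqrt_one_sub_sq {δ s : ℝ} (hs : δ / √(1 + δ ^ 2) ≤ s) (hs1 : s < 1) :
    δ ≤ s / √(1 - s ^ 2) := by
  have harc : Real.arctan δ ≤ Real.arcsin s := by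
    rw [Real.arctan_eq_arcsin]
    exact Real.arcsin_le_arcsin hs
  have hbot : -(Real.pi / 2) < Real.arcsin s := (Real.neg_pi_div_two_lt_arctan δ).trans_le harc
  calc δ = Real.tan (Real.arctan δ) := (Real.tan_arctan δ).symm
    _ ≤ Real.tan (Real.arcsin s) :=
      Real.strictMonoOn_tan.monotoneOn (Real.arctan_mem_Ioo δ)
        ⟨hbot, Real.arcsin_lt_pi_div_two.2 hs1⟩ harc
    _ = s / √(1 - s ^ 2) := Real.tan_arcsin s

theorem ereal_le_coe_sub_of_coe_le_sub {a c : EReal} {ξ r : ℝ} (hc : c ≤ (ξ : EReal))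
    (h : (r : EReal) ≤ c - a) : a ≤ ((ξ - r : ℝ) : EReal) := by
  rw [EReal.coe_sub,
    EReal.le_sub_iff_add_le (.inl (EReal.coe_ne_bot r)) (.inl (EReal.coe_ne_top r)), add_comm]
  exact (EReal.add_le_of_le_sub h).trans hc

namespace Epi

variable {X : Type*} [MetricSpace X] {I : X → EReal}

theorem apply_pt_le_epiExt (p : Epi I) : I p.pt ≤ (epiExt I p : EReal) :=
  p.2

theorem dist_eq_sqrt (p q : Epi I) :
    dist p q = √(dist p.pt q.pt ^ 2 + dist (epiExt I p) (epiExt I q) ^ 2) := by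
  rw [Subtype.dist_eq, WithLp.prod_dist_eq_add (by norm_num), Real.sqrt_eq_rpow]
  simp only [ENNReal.toReal_ofNat, Real.rpow_ofNat]
  rfl

theorem isInducing_pt_epiExt : Topology.IsInducing fun p : Epi I => (p.pt, epiExt I p) :=
  (WithLp.homeomorphProd 2 X ℝ).isInducing.comp Topology.IsInducing.subtypeVal

theorem continuous_pt : Continuous (pt : Epi I → X) :=
  isInducing_pt_epiExt.continuous.fst

theorem continuous_epiExt : Continuous (epiExt I) :=
  isInducing_pt_epiExt.continuous.snd

open Classical in
/-- The lift to the epigraph of the deformation `Ψ` of `X`, lowering the height at rate `δ`: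
`((u, ξ), t) ↦ (Ψ (u, t), ξ - δ t)`. Where this pair is not in the epigraph, the lift is made
constant, with the junk value `(u, ξ)`. -/
noncomputable def descend (Ψ : X → ℝ → X) (δ : ℝ) (p : Epi I) (t : ℝ) : Epi I :=
  if h : I (Ψ p.pt t) ≤ ((epiExt I p - δ * t : ℝ) : EReal) then mk' I _ _ h else p

variable {Ψ : X → ℝ → X} {δ : ℝ} {p : Epi I} {t : ℝ}

theorem pt_descend (h : I (Ψ p.pt t) ≤ ((epiExt I p - δ * t : ℝ) : EReal)) :
    (descend Ψ δ p t).pt = Ψ p.pt t := by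
  rw [descend, dif_pos h]
  rfl

theorem epiExt_descend (h : I (Ψ p.pt t) ≤ ((epiExt I p - δ * t : ℝ) : EReal)) :
    epiExt I (descend Ψ δ p t) = epiExt I p - δ * t := by
  rw [descend, dif_pos h]
  rfl

theorem dist_descend_le (h : I (Ψ p.pt t) ≤ ((epiExt I p - δ * t : ℝ) : EReal))
    (hdist : dist (Ψ p.pt t) p.pt ≤ t) :
    dist (descend Ψ δ p t) p ≤ √(1 + δ ^ 2) * t := by
  have ht : 0 ≤ t := dist_nonneg.trans hdist
  calc dist (descend Ψ δ p t) p
      = √(dist (Ψ p.pt t) p.pt ^ 2 + (δ * t) ^ 2) := by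
        rw [dist_eq_sqrt, pt_descend h, epiExt_descend h, dist_self_sub_left, Real.norm_eq_abs,
          sq_abs]
    _ ≤ √(t ^ 2 + (δ * t) ^ 2) := by gcongr
    _ = √((1 + δ ^ 2) * t ^ 2) := by ring_nf
    _ = √(1 + δ ^ 2) * t := by rw [Real.sqrt_mul (by positivity), Real.sqrt_sq ht]

theorem continuousOn_descend {s : Set (Epi I × ℝ)}
    (hcont : ContinuousOn (fun q : Epi I × ℝ => Ψ q.1.pt q.2) s)
    (hmem : ∀ q ∈ s, I (Ψ q.1.pt q.2) ≤ ((epiExt I q.1 - δ * q.2 : ℝ) : EReal)) :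
    ContinuousOn (fun q : Epi I × ℝ => descend Ψ δ q.1 q.2) s := by
  have hheight : Continuous fun q : Epi I × ℝ => epiExt I q.1 - δ * q.2 :=
    (continuous_epiExt.comp continuous_fst).sub (continuous_const.mul continuous_snd)
  refine isInducing_pt_epiExt.continuousOn_iff.2 ?_
  exact (hcont.prodMk hheight.continuousOn).congr fun q hq =>
    Prod.ext (pt_descend (hmem q hq)) (epiExt_descend (hmem q hq))

end Epi

section Descent

variable {X : Type*} [MetricSpace X] {I : X → EReal} {δ b α : ℝ} {U : Set X} {Ψ : X → ℝ → X}

theorem isDeltaRegular_epiExt_of_descent {p₀ : Epi I} (hb : epiExt I p₀ < b) (hα : 0 < α)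
    (hU : U ∈ 𝓝 p₀.pt)
    (hcont : ContinuousOn (fun p : X × ℝ => Ψ p.1 p.2)
      ((U ∩ {u | I u ≤ (b : EReal)}) ×ˢ Icc 0 α))
    (hdist : ∀ u ∈ U ∩ {u | I u ≤ (b : EReal)}, ∀ t ∈ Icc (0 : ℝ) α, dist (Ψ u t) u ≤ t)
    (hdec : ∀ u ∈ U ∩ {u | I u ≤ (b : EReal)}, ∀ t ∈ Icc (0 : ℝ) α,
      ((δ * t : ℝ) : EReal) ≤ I u - I (Ψ u t)) :
    IsDeltaRegular (epiExt I) p₀ (δ / √(1 + δ ^ 2)) := by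
  let V : Set (Epi I) := {p | p.pt ∈ U ∧ epiExt I p < b}
  have hV : V ∈ 𝓝 p₀ := inter_mem (Epi.continuous_pt.continuousAt.preimage_mem_nhds hU)
    (Epi.continuous_epiExt.continuousAt.eventually_lt_const hb)
  have hsub : ∀ p ∈ V, p.pt ∈ U ∩ {u | I u ≤ (b : EReal)} := fun p hp =>
    ⟨hp.1, p.apply_pt_le_epiExt.trans (EReal.coe_le_coe hp.2.le)⟩
  have hepi : ∀ p ∈ V, ∀ t ∈ Icc 0 α,
      I (Ψ p.pt t) ≤ ((epiExt I p - δ * t : ℝ) : EReal) := fun p hp t ht =>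
    ereal_le_coe_sub_of_coe_le_sub p.apply_pt_le_epiExt (hdec _ (hsub p hp) t ht)
  refine isDeltaRegular_div_of_dist_le_mul (by positivity) hα hV (ψ := Epi.descend Ψ δ)
    (Epi.continuousOn_descend ?_ fun q hq => hepi _ hq.1 _ hq.2)
    (fun p hp t ht => Epi.dist_descend_le (hepi p hp t ht) (hdist _ (hsub p hp) t ht))
    fun p hp t ht => ?_
  · exact hcont.comp
      ((Epi.continuous_pt.comp continuous_fst).prodMk continuous_snd).continuousOn
      fun q hq => ⟨hsub _ hq.1, hq.2⟩
  · rw [Epi.epiExt_descend (hepi p hp t ht), sub_sub_cancel]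

theorem ofReal_le_lscWeakSlope_of_isDeltaRegular {x : X} (hδ : 0 < δ)
    (hx : I x ≤ ((I x).toReal : EReal))
    (h : IsDeltaRegular (epiExt I) (Epi.mk' I x (I x).toReal hx) (δ / √(1 + δ ^ 2))) :
    ENNReal.ofReal δ ≤ lscWeakSlope I x := by
  have hslope := ofReal_le_weakSlope (by positivity) h
  rw [lscWeakSlope, dif_pos hx]
  dsimp only
  split_ifs with hs
  · refine ENNReal.ofReal_le_ofReal (le_div_sqrt_one_sub_sq ?_ ?_)
    · exact (ENNReal.ofReal_le_iff_le_toReal hs.ne_top).1 hslope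
    · simpa only [ENNReal.toReal_one] using ENNReal.toReal_strict_mono ENNReal.one_ne_top hs
  · exact le_top

theorem weakSlope_ge_of_descent_general {x : X} (hδ : 0 < δ) (hb : I x < (b : EReal))
    (hα : 0 < α) (hU : U ∈ 𝓝 x)
    (hcont : ContinuousOn (fun p : X × ℝ => Ψ p.1 p.2)
      ((U ∩ {u | I u ≤ (b : EReal)}) ×ˢ Icc 0 α))
    (hdist : ∀ u ∈ U ∩ {u | I u ≤ (b : EReal)}, ∀ t ∈ Icc (0 : ℝ) α, dist (Ψ u t) u ≤ t)
    (hdec : ∀ u ∈ U ∩ {u | I u ≤ (b : EReal)}, ∀ t ∈ Icc (0 : ℝ) α,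
      ((δ * t : ℝ) : EReal) ≤ I u - I (Ψ u t)) :
    ENNReal.ofReal δ ≤ lscWeakSlope I x := by
  have hbot : I x ≠ ⊥ := fun h => by
    have h0 := hdec x ⟨mem_of_mem_nhds hU, hb.le⟩ 0 (left_mem_Icc.2 hα.le)
    rw [h, EReal.bot_sub] at h0
    exact EReal.coe_ne_bot _ (le_bot_iff.1 h0)
  have hcoe : ((I x).toReal : EReal) = I x := EReal.coe_toReal hb.ne_top hbot
  have hlt : (I x).toReal < b := by rwa [← EReal.coe_lt_coe_iff, hcoe]
  exact ofReal_le_lscWeakSlope_of_isDeltaRegular hδ hcoe.ge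
    (isDeltaRegular_epiExt_of_descent (p₀ := Epi.mk' I x _ hcoe.ge) hlt hα hU hcont hdist hdec)

end Descent

/-- Degiovanni–Marzocchi lower bound on the weak metric slope (Proposition 2.7): if near
`x ∈ D(I)` there is a continuous map `Ψ` on `(U ∩ {I ≤ b}) × [0,α]` decreasing `I` at rate `δ`
while moving points at speed at most one, then `|dI|(x) ≥ δ`. -/
theorem weakSlope_ge_of_descent {X : Type*} [MetricSpace X] (I : X → EReal)
    (hproper : ∃ x, I x ≠ ⊤) (hbot : ∀ x, I x ≠ ⊥) (hlsc : LowerSemicontinuous I)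
    (x : X) (hx : I x ≠ ⊤)
    (δ b α : ℝ) (hδ : 0 < δ) (hb : I x < (b : EReal)) (hα : 0 < α)
    (U : Set X) (hU : U ∈ 𝓝 x)
    (Ψ : X → ℝ → X)
    (hcont : ContinuousOn (fun p : X × ℝ => Ψ p.1 p.2)
      ((U ∩ {u | I u ≤ (b : EReal)}) ×ˢ Icc 0 α))
    (hdist : ∀ u ∈ U ∩ {u | I u ≤ (b : EReal)}, ∀ t ∈ Icc (0:ℝ) α, dist (Ψ u t) u ≤ t)
    (hdec : ∀ u ∈ U ∩ {u | I u ≤ (b : EReal)}, ∀ t ∈ Icc (0:ℝ) α,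
      ((δ * t : ℝ) : EReal) ≤ I u - I (Ψ u t)) :
    ENNReal.ofReal δ ≤ lscWeakSlope I x :=
  weakSlope_ge_of_descent_general hδ hb hα hU hcont hdist hdec
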